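/- Let R be a finitely generated algebra over a field and M a nonzero finitely generated R-module. Then M is a sequentially Cohen-Macaulay R-module if and only if M_P is a sequentially Cohen-Macaulay R_P-module for every prime P in Supp_R M. -/

import Mathlib

open IsLocalRing

/-- The (Krull) dimension of a module: `dim_R M = dim (R / ann_R M)`;
the zero module has dimension `⊥` (i.e. `-∞`). -/
noncomputable def moduleDim (R : Type*) [CommRing R] (M : Type*) [AddCommGroup M]
    [Module R M] : WithBot ℕ∞ :=
  ringKrullDim (R ⧸ Module.annihilator R M)

/-- `dimLe d n` means `d ≤ n` where `n : ℤ` and `d` is a dimension in `WithBot ℕ∞`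
(so for `n < 0` this means `d = ⊥`, i.e. the module is zero). -/
def dimLe (d : WithBot ℕ∞) (n : ℤ) : Prop :=
  if 0 ≤ n then d ≤ ((n.toNat : ℕ∞) : WithBot ℕ∞) else d = ⊥

/-- The depth of a module over a Noetherian local ring: the supremum of lengths of
regular sequences on `M` contained in the maximal ideal. -/
noncomputable def moduleDepth (R : Type*) [CommRing R] [IsLocalRing R] (M : Type*)
    [AddCommGroup M] [Module R M] : ℕ∞ :=
  sSup {n : ℕ∞ | ∃ rs : List R, (rs.length : ℕ∞) = n ∧
    (∀ r ∈ rs, r ∈ maximalIdeal R) ∧ RingTheory.Sequence.IsRegular M rs}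

/-- A module over a Noetherian local ring is Cohen-Macaulay if it is zero or
`depth M = dim M`. -/
def IsCMModule (R : Type*) [CommRing R] [IsLocalRing R] (M : Type*) [AddCommGroup M]
    [Module R M] : Prop :=
  Nontrivial M → (moduleDepth R M : WithBot ℕ∞) = moduleDim R M

/-- A module over a (not necessarily local) commutative ring is Cohen-Macaulay if all its
localizations at primes are Cohen-Macaulay. -/
def IsCMModuleGen (R : Type*) [CommRing R] (M : Type*) [AddCommGroup M] [Module R M] : Prop :=
  ∀ (P : Ideal R) [P.IsPrime],
    IsCMModule (Localization.AtPrime P) (LocalizedModule P.primeCompl M)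

/-- `D : Fin (ℓ+1) → Submodule R M` is the dimension filtration of `M`:
`D 0 = 0`, `D ℓ = M`, the chain is strictly increasing, each `D i` (for `i ≥ 1`) is the
largest submodule of its dimension, and every nonzero submodule which is largest among
submodules of dimension at most its own dimension occurs in the chain. -/
def IsDimFiltration (R : Type*) [CommRing R] (M : Type*) [AddCommGroup M] [Module R M]
    (ℓ : ℕ) (D : Fin (ℓ + 1) → Submodule R M) : Prop :=
  D 0 = ⊥ ∧ D (Fin.last ℓ) = ⊤ ∧ StrictMono D ∧
  (∀ i : Fin ℓ, IsGreatest
    {N : Submodule R M | moduleDim R ↥N ≤ moduleDim R ↥(D i.succ)} (D i.succ)) ∧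
  (∀ N : Submodule R M, N ≠ ⊥ →
    IsGreatest {N' : Submodule R M | moduleDim R ↥N' ≤ moduleDim R ↥N} N → ∃ i, D i = N)

/-- A module over a local ring is sequentially Cohen-Macaulay if the consecutive quotients
of its dimension filtration are Cohen-Macaulay. -/
def IsSeqCM (R : Type*) [CommRing R] [IsLocalRing R] (M : Type*) [AddCommGroup M]
    [Module R M] : Prop :=
  ∃ (ℓ : ℕ) (D : Fin (ℓ + 1) → Submodule R M), IsDimFiltration R M ℓ D ∧
    ∀ i : Fin ℓ, IsCMModule R
      (↥(D i.succ) ⧸ (D i.castSucc).comap (D i.succ).subtype)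

/-- Sequentially Cohen-Macaulay over a not necessarily local ring. -/
def IsSeqCMGen (R : Type*) [CommRing R] (M : Type*) [AddCommGroup M] [Module R M] : Prop :=
  ∃ (ℓ : ℕ) (D : Fin (ℓ + 1) → Submodule R M), IsDimFiltration R M ℓ D ∧
    ∀ i : Fin ℓ, IsCMModuleGen R
      (↥(D i.succ) ⧸ (D i.castSucc).comap (D i.succ).subtype)

/-- A local ring is sequentially Cohen-Macaulay if it is so as a module over itself. -/
def IsSeqCMRing (R : Type*) [CommRing R] [IsLocalRing R] : Prop := IsSeqCM R R

/-!
Write `M_{<n}` for the largest submodule of `M` of dimension less than `n`, that is, the module of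
sections supported at the primes `p` with `dim R ⧸ p < n`. The dimension filtration lists the
distinct `M_{<n}`, so `M` is sequentially Cohen-Macaulay if and only if all the quotients
`M_{<n+1} ⧸ M_{<n}` are Cohen-Macaulay.

Let `P` be a prime and `c = dim R ⧸ P`. By the dimension formula, `dim R ⧸ (q ∩ R)` is
`dim R_P ⧸ q + c` for every prime `q` of `R_P`. Sections with support in a specialization-closed set
localize well over a Noetherian ring, so `(M_{<n})_P = (M_P)_{<n-c}`. Hence the quotients for `M_P`
are the localizations of those for `M`, and being Cohen-Macaulay is checked on localizations.

The dimension formula for affine algebras comes down to `dim A ≤ ht Q + dim A ⧸ Q` for affine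
domains. Noether normalization and going down reduce this to polynomial rings, and there one
cuts down by an irreducible polynomial in `Q` and uses induction on the dimension.
-/

/-! ### The dimension formula for affine algebras -/

theorem exists_natCast_forall_le_iff_lt {x : WithBot ℕ∞} (hx : x < ⊤) :
    ∃ n : ℕ, ∀ y, y ≤ x ↔ y < n := by
  induction x with
  | bot => exact ⟨0, fun y ↦ by cases y <;> simp⟩
  | coe x =>
    lift x to ℕ using (WithBot.coe_lt_coe.mp hx).ne
    exact ⟨x + 1, fun y ↦ by
      rw [Nat.cast_add_one]; exact ENat.WithBot.lt_add_one_iff.symm⟩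

theorem add_natCast_lt_natCast_iff {a : WithBot ℕ∞} (ha : a ≠ ⊥) (c n : ℕ) :
    a + c < n ↔ a < (n - c : ℕ) := by
  lift a to ℕ∞ using ha
  rw [← WithBot.coe_natCast, ← WithBot.coe_natCast, ← WithBot.coe_natCast, ← WithBot.coe_add,
    WithBot.coe_lt_coe, WithBot.coe_lt_coe, ENat.natCast_sub, lt_tsub_iff_right]

theorem ringKrullDim_le_of_isIntegral (R S : Type*) [CommRing R] [CommRing S] [Algebra R S]
    [Algebra.IsIntegral R S] : ringKrullDim S ≤ ringKrullDim R :=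
  Order.krullDim_le_of_strictMono (PrimeSpectrum.comap (algebraMap R S))
    fun _ _ h ↦ Ideal.IsIntegral.comap_lt_comap h

theorem ringKrullDim_eq_of_isIntegral (R S : Type*) [CommRing R] [CommRing S] [Algebra R S]
    [Algebra.IsIntegral R S] [FaithfulSMul R S] : ringKrullDim S = ringKrullDim R := by
  refine (ringKrullDim_le_of_isIntegral R S).antisymm (iSup_le fun l ↦ ?_)
  obtain ⟨P, _, _⟩ := Ideal.nonempty_primesOver (S := S) l.head.asIdeal
  obtain ⟨L, hL, -⟩ := Ideal.exists_ltSeries_of_hasGoingUp l P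
  exact hL ▸ Order.LTSeries.length_le_krullDim L

theorem ringKrullDim_le_height_add_of_isIntegral (B A : Type*) [CommRing B] [CommRing A]
    [IsDomain A] [IsIntegrallyClosed B] [IsNoetherianRing B] [IsNoetherianRing A]
    [Algebra B A] [Algebra.IsIntegral B A] [FaithfulSMul B A] (Q : Ideal A) [Q.IsPrime]
    (h : ringKrullDim B ≤ (Q.under B).height + ringKrullDim (B ⧸ Q.under B)) :
    ringKrullDim A ≤ Q.height + ringKrullDim (A ⧸ Q) := by
  have height_le : (Q.under B).height ≤ Q.height := by
    rw [Ideal.height_eq_height_add_of_liesOver_of_hasGoingDown (Q.under B) Q]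
    exact le_self_add
  rw [ringKrullDim_eq_of_isIntegral B A, ringKrullDim_eq_of_isIntegral (B ⧸ Q.under B) (A ⧸ Q)]
  exact h.trans (add_le_add_left (WithBot.coe_le_coe.mpr height_le) _)

theorem height_add_one_le_height_apply {α β : Type*} [Preorder α] [PartialOrder β] [OrderBot β]
    {f : α → β} (hf : StrictMono f) (hbot : ∀ a, f a ≠ ⊥) (a : α) :
    Order.height a + 1 ≤ Order.height (f a) := by
  have hg : StrictMono (WithBot.recBotCoe ⊥ f : WithBot α → β) :=
    WithBot.strictMono_iff.mpr ⟨hf, fun b ↦ (hbot b).bot_lt⟩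
  exact (Order.height_coe_withBot a).ge.trans (Order.height_le_height_apply_of_strictMono _ hg a)

theorem height_map_quotientMk_add_one_le {A : Type*} [CommRing A] [IsDomain A] {I q : Ideal A}
    [q.IsPrime] (hI : I ≠ ⊥) (hIq : I ≤ q) :
    (q.map (Ideal.Quotient.mk I)).height + 1 ≤ q.height := by
  have hQ : (q.map (Ideal.Quotient.mk I)).IsPrime := Ideal.isPrime_map_quotientMk_of_isPrime hIq
  have strictMono_comap : StrictMono (PrimeSpectrum.comap (Ideal.Quotient.mk I)) :=
    I.primeSpectrumQuotientOrderIsoZeroLocus.strictMono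
  have comap_ne_bot (p) : PrimeSpectrum.comap (Ideal.Quotient.mk I) p ≠ ⊥ := fun h ↦
    hI <| eq_bot_iff.mpr <| (Ideal.mk_ker (I := I)).ge.trans <|
      (Ideal.ker_le_comap _).trans_eq (congrArg PrimeSpectrum.asIdeal h)
  convert height_add_one_le_height_apply strictMono_comap comap_ne_bot ⟨_, hQ⟩
  · exact PrimeSpectrum.height_eq_orderHeight ⟨_, hQ⟩
  · rw [← PrimeSpectrum.height_eq_orderHeight, PrimeSpectrum.comap_asIdeal,
      Ideal.comap_map_quotientMk, sup_eq_right.mpr hIq]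

theorem ringKrullDim_quotient_add_one_le_height_add {A : Type*} [CommRing A] [IsDomain A]
    {I q : Ideal A} [q.IsPrime] (hI : I ≠ ⊥) (hIq : I ≤ q)
    (h : ringKrullDim (A ⧸ I) ≤ (q.map (Ideal.Quotient.mk I)).height +
      ringKrullDim ((A ⧸ I) ⧸ q.map (Ideal.Quotient.mk I))) :
    ringKrullDim (A ⧸ I) + 1 ≤ q.height + ringKrullDim (A ⧸ q) := by
  rw [ringKrullDim_eq_of_ringEquiv (DoubleQuot.quotQuotEquivQuotOfLE hIq)] at h
  calc ringKrullDim (A ⧸ I) + 1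
      ≤ (q.map (Ideal.Quotient.mk I)).height + ringKrullDim (A ⧸ q) + 1 := by gcongr
    _ = ((q.map (Ideal.Quotient.mk I)).height + 1 : ℕ∞) + ringKrullDim (A ⧸ q) := by
      push_cast; ring
    _ ≤ q.height + ringKrullDim (A ⧸ q) := by
      gcongr
      exact WithBot.coe_le_coe.mpr (height_map_quotientMk_add_one_le hI hIq)

theorem height_add_ringKrullDim_quotient_le {A : Type*} [CommRing A] (q : Ideal A) [q.IsPrime] :
    q.height + ringKrullDim (A ⧸ q) ≤ ringKrullDim A := by
  let x : PrimeSpectrum A := ⟨q, ‹_›⟩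
  have : Nonempty (PrimeSpectrum A) := ⟨x⟩
  have hcoheight : ringKrullDim (A ⧸ q) = Order.coheight x := by
    rw [ringKrullDim_quotient, Order.coheight_eq_krullDim_Ici]
    rfl
  rw [hcoheight, ringKrullDim, Order.krullDim_eq_iSup_height_add_coheight_of_nonempty,
    show q.height = Order.height x from PrimeSpectrum.height_eq_orderHeight x]
  exact WithBot.coe_le_coe.mpr (le_iSup (fun a ↦ Order.height a + Order.coheight a) x)

theorem ringKrullDim_mvPolynomial_fin_of_field (k : Type*) [Field k] (n : ℕ) :
    ringKrullDim (MvPolynomial (Fin n) k) = n := by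
  simp [MvPolynomial.ringKrullDim_of_isNoetherianRing]

theorem height_eq_of_isMaximal_mvPolynomial (k : Type*) [Field k] (n : ℕ)
    (m : Ideal (MvPolynomial (Fin n) k)) [hm : m.IsMaximal] : m.height = n := by
  induction n with
  | zero =>
    have h := Ideal.height_le_ringKrullDim_of_ne_top hm.ne_top
    rw [ringKrullDim_mvPolynomial_fin_of_field] at h
    simpa using h
  | succ n ih =>
    let e := (MvPolynomial.finSuccEquiv k n).toRingEquiv
    have : (m.comap e.symm).IsMaximal := Ideal.comap_isMaximal_of_equiv e.symm
    have hC := Polynomial.isMaximal_comap_C_of_isJacobsonRing (m.comap e.symm)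
    have : (m.comap e.symm).LiesOver ((m.comap e.symm).comap Polynomial.C) := ⟨rfl⟩
    rw [← e.symm.height_comap, Polynomial.height_eq_height_add_one
      ((m.comap e.symm).comap Polynomial.C) (m.comap e.symm), ih _ (hm := hC)]
    rfl

theorem ringKrullDim_mvPolynomial_quotient_span_add_one {k : Type*} [Field k] {n : ℕ}
    {f : MvPolynomial (Fin n) k} (hf : f ≠ 0) (hfu : ¬IsUnit f) :
    ringKrullDim (MvPolynomial (Fin n) k ⧸ Ideal.span {f}) + 1 = n := by
  refine le_antisymm ?_ ?_
  · rw [← ringKrullDim_mvPolynomial_fin_of_field k n]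
    exact ringKrullDim_quotient_succ_le_of_nonZeroDivisor (mem_nonZeroDivisors_of_ne_zero hf)
  · obtain ⟨m, _, hfm⟩ := exists_max_ideal_of_mem_nonunits hfu
    have height_le := Ideal.height_le_ringKrullDim_quotient_add_one hfm
    rwa [height_eq_of_isMaximal_mvPolynomial k n m] at height_le

theorem ringKrullDim_le_height_add_of_mvPolynomial (k : Type*) [Field k] {A : Type*} [CommRing A]
    [IsDomain A] [Algebra k A] [Algebra.FiniteType k A]
    (h : ∀ s : ℕ, ringKrullDim A = s → ∀ (q : Ideal (MvPolynomial (Fin s) k)) [q.IsPrime],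
      ringKrullDim (MvPolynomial (Fin s) k) ≤
        q.height + ringKrullDim (MvPolynomial (Fin s) k ⧸ q))
    (Q : Ideal A) [Q.IsPrime] : ringKrullDim A ≤ Q.height + ringKrullDim (A ⧸ Q) := by
  have := Algebra.FiniteType.isNoetherianRing k A
  obtain ⟨s, g, hg, hgi⟩ := exists_integral_inj_algHom_of_fg k A
  algebraize [g.toRingHom]
  have : FaithfulSMul (MvPolynomial (Fin s) k) A :=
    (faithfulSMul_iff_algebraMap_injective _ _).mpr hg
  have hs : ringKrullDim A = s := (ringKrullDim_eq_of_isIntegral (MvPolynomial (Fin s) k) A).trans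
    (ringKrullDim_mvPolynomial_fin_of_field k s)
  exact ringKrullDim_le_height_add_of_isIntegral (MvPolynomial (Fin s) k) A Q (h s hs _)

theorem ringKrullDim_mvPolynomial_le_height_add (k : Type*) [Field k] (n : ℕ)
    (q : Ideal (MvPolynomial (Fin n) k)) [q.IsPrime] :
    ringKrullDim (MvPolynomial (Fin n) k) ≤
      q.height + ringKrullDim (MvPolynomial (Fin n) k ⧸ q) := by
  induction n using Nat.strong_induction_on with
  | _ n ih =>
  rcases eq_or_ne q ⊥ with rfl | hq
  · rw [Ideal.height_bot, ← ringKrullDim_eq_of_ringEquiv (RingEquiv.quotientBot _)]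
    simp
  obtain ⟨f, hfq, hf⟩ := Ideal.IsPrime.exists_mem_prime_of_ne_bot ‹q.IsPrime› hq
  have : (Ideal.span {f}).IsPrime := (Ideal.span_singleton_prime hf.ne_zero).mpr hf
  have hfq : Ideal.span {f} ≤ q := (Ideal.span_singleton_le_iff_mem q).mpr hfq
  have hdim := ringKrullDim_mvPolynomial_quotient_span_add_one hf.ne_zero hf.not_isUnit
  rw [ringKrullDim_mvPolynomial_fin_of_field, ← hdim]
  have := Ideal.isPrime_map_quotientMk_of_isPrime hfq
  refine ringKrullDim_quotient_add_one_le_height_add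
    (Ideal.span_singleton_eq_bot.not.mpr hf.ne_zero) hfq ?_
  refine ringKrullDim_le_height_add_of_mvPolynomial k (fun s hs q _ ↦ ih s ?_ q) _
  rw [hs] at hdim
  exact (Nat.lt_succ_self s).trans_eq (by exact_mod_cast hdim)

/-- The dimension formula `dim R ⧸ p = ht (P ⧸ p) + dim R ⧸ P` for all primes `p ≤ P`, which lets
`dim R ⧸ p` be compared with the dimension of its localization at `P`. -/
def HasDimensionFormula (R : Type*) [CommRing R] : Prop :=
  ∀ (p P : Ideal R) [p.IsPrime] [P.IsPrime], p ≤ P →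
    ringKrullDim (R ⧸ p) = (P.map (Ideal.Quotient.mk p)).height + ringKrullDim (R ⧸ P)

theorem hasDimensionFormula_of_finiteType (k R : Type*) [Field k] [CommRing R] [Algebra k R]
    [Algebra.FiniteType k R] : HasDimensionFormula R := by
  intro p P _ _ hpP
  have := Ideal.isPrime_map_quotientMk_of_isPrime hpP
  rw [← ringKrullDim_eq_of_ringEquiv (DoubleQuot.quotQuotEquivQuotOfLE hpP)]
  exact (ringKrullDim_le_height_add_of_mvPolynomial k
    (fun s _ q _ ↦ ringKrullDim_mvPolynomial_le_height_add k s q) _).antisymm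
    (height_add_ringKrullDim_quotient_le _)

theorem supportDim_lt_iff {R M : Type*} [CommRing R] [AddCommGroup M] [Module R M] {n : ℕ} :
    Module.supportDim R M < n ↔ ∀ p ∈ Module.support R M, ringKrullDim (R ⧸ p.asIdeal) < n := by
  refine ⟨fun h p hp ↦ lt_of_le_of_lt ?_ h, fun h ↦ ?_⟩
  · rw [ringKrullDim_quotient]
    exact Order.krullDim_le_of_strictMono
      (fun q ↦ ⟨q, Module.mem_support_mono ((PrimeSpectrum.asIdeal_le_asIdeal _ _).mp q.2) hp⟩)
      fun _ _ h ↦ h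
  · by_contra! hn
    obtain ⟨l, hl⟩ := Order.le_krullDim_iff.mp hn
    refine (h l.head l.head.2).not_ge ?_
    rw [ringKrullDim_quotient, Order.le_krullDim_iff]
    exact ⟨⟨l.length, fun i ↦ ⟨l i, LTSeries.head_le l i⟩, l.step⟩, hl⟩

theorem HasDimensionFormula.exists_ringKrullDim_quotient_eq {R : Type*} [CommRing R]
    [IsNoetherianRing R] (hR : HasDimensionFormula R) {p : Ideal R} (hp : p.IsPrime) :
    ∃ n : ℕ, ringKrullDim (R ⧸ p) = n := by
  obtain ⟨m, hm, hpm⟩ := Ideal.exists_le_maximal p hp.ne_top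
  have := Ideal.isPrime_map_quotientMk_of_isPrime hpm
  let := Ideal.Quotient.field m
  obtain ⟨n, hn⟩ := ENat.ne_top_iff_exists.mp
    (Ideal.height_ne_top_of_isPrime (I := m.map (Ideal.Quotient.mk p)))
  exact ⟨n, by rw [hR p m hpm, ringKrullDim_eq_zero_of_field, add_zero, ← hn]; rfl⟩

theorem HasDimensionFormula.ringKrullDim_lt_top {R : Type*} [CommRing R] [IsNoetherianRing R]
    (hR : HasDimensionFormula R) : ringKrullDim R < ⊤ := by
  have eventually_lt : ∀ᶠ n : ℕ in .atTop, ∀ p ∈ minimalPrimes R, ringKrullDim (R ⧸ p) < n := by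
    refine (Filter.eventually_all_finite (minimalPrimes.finite_of_isNoetherianRing R)).mpr
      fun p hp ↦ ?_
    obtain ⟨d, hd⟩ := hR.exists_ringKrullDim_quotient_eq hp.1.1
    filter_upwards [Filter.eventually_gt_atTop d] with n hn
    exact hd.trans_lt (by exact_mod_cast hn)
  obtain ⟨n, hn⟩ := eventually_lt.exists
  suffices h : ringKrullDim R < n from h.trans_le le_top
  rw [← Module.supportDim_self_eq_ringKrullDim, supportDim_lt_iff]
  intro p _
  obtain ⟨p', hp', hle⟩ := Ideal.exists_minimalPrimes_le (bot_le (a := p.asIdeal))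
  exact (ringKrullDim_le_of_surjective (Ideal.Quotient.factor hle)
    (Ideal.Quotient.factor_surjective hle)).trans_lt (hn p' hp')

theorem isLocalization_atPrime_quotient {R : Type*} [CommRing R] (P : Ideal R) [P.IsPrime]
    (S : Type*) [CommRing S] [Algebra R S] [IsLocalization.AtPrime S P] (q : Ideal S)
    [(P.map (Ideal.Quotient.mk (q.under R))).IsPrime] (hqP : q.under R ≤ P) :
    IsLocalization.AtPrime (S ⧸ q) (P.map (Ideal.Quotient.mk (q.under R))) := by
  have hP : P.primeCompl.map (Ideal.Quotient.mk (q.under R)) =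
      (P.map (Ideal.Quotient.mk (q.under R))).primeCompl := by
    rw [← Ideal.map_primeCompl_comap_of_surjective _ Ideal.Quotient.mk_surjective]
    congr!
    rw [Ideal.comap_map_quotientMk, sup_eq_right.mpr hqP]
  rw [IsLocalization.AtPrime, ← hP]
  refine IsLocalization.of_surjective P.primeCompl (S := S) (Ideal.Quotient.mk (q.under R))
    Ideal.Quotient.mk_surjective (Ideal.Quotient.mk q) Ideal.Quotient.mk_surjective rfl ?_
  rw [Ideal.mk_ker, Ideal.mk_ker, IsLocalization.map_under P.primeCompl S q]

theorem HasDimensionFormula.ringKrullDim_quotient_under {R : Type*} [CommRing R]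
    (hR : HasDimensionFormula R) (P : Ideal R) [P.IsPrime] (S : Type*) [CommRing S] [Algebra R S]
    [IsLocalization.AtPrime S P] (q : Ideal S) [q.IsPrime] :
    ringKrullDim (R ⧸ q.under R) = ringKrullDim (S ⧸ q) + ringKrullDim (R ⧸ P) := by
  have hqP : q.under R ≤ P :=
    (IsLocalization.AtPrime.orderIsoOfPrime S P ⟨q, ‹_›⟩).2.2
  have := Ideal.isPrime_map_quotientMk_of_isPrime hqP
  have := isLocalization_atPrime_quotient P S q hqP
  rw [hR _ P hqP, IsLocalization.AtPrime.ringKrullDim_eq_height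
    (P.map (Ideal.Quotient.mk (q.under R))) (S ⧸ q)]

/-! ### Sections with support and localization -/

section SupportedSections

variable {R M : Type*} [CommRing R] [AddCommGroup M] [Module R M]

variable (M) in
/-- The submodule `Γ_Z(M)` of sections of `M` supported in `Z`, encoded as the elements vanishing in
`M_p` for all `p ∉ Z`. -/
noncomputable def supportedSubmodule (Z : Set (PrimeSpectrum R)) : Submodule R M :=
  ⨅ p ∈ Zᶜ, LinearMap.ker (LocalizedModule.mkLinearMap p.asIdeal.primeCompl M)

theorem mem_supportedSubmodule {Z : Set (PrimeSpectrum R)} {m : M} :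
    m ∈ supportedSubmodule M Z ↔ ∀ p ∉ Z, ∃ r ∉ p.asIdeal, r • m = 0 := by
  simp only [supportedSubmodule, Submodule.mem_iInf, Set.mem_compl_iff,
    LocalizedModule.mem_ker_mkLinearMap_iff, Ideal.mem_primeCompl_iff]

theorem le_supportedSubmodule_iff {Z : Set (PrimeSpectrum R)} {N : Submodule R M} :
    N ≤ supportedSubmodule M Z ↔ Module.support R N ⊆ Z := by
  have support_subset : Module.support R N ⊆ Z ↔ ∀ p ∉ Z, ∀ m ∈ N, ∃ r ∉ p.asIdeal, r • m = 0 := by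
    rw [← Set.compl_subset_compl]
    simp only [Set.subset_def, Set.mem_compl_iff,
      Module.notMem_support_iff', Subtype.forall, Submodule.mk_eq_zero, SetLike.mk_smul_mk]
  simp only [support_subset, SetLike.le_def, mem_supportedSubmodule]
  tauto

theorem supportedSubmodule_mono : Monotone (supportedSubmodule (R := R) M) :=
  fun _ _ h _ hm ↦ mem_supportedSubmodule.mpr fun p hp ↦
    mem_supportedSubmodule.mp hm p fun hp' ↦ hp (h hp')

theorem exists_mem_forall_minimalPrimes_disjoint [IsNoetherianRing R] (S : Submonoid R) (m : M) :
    ∃ t ∈ S, ∀ p ∈ (R ∙ (t • m)).annihilator.minimalPrimes, Disjoint (S : Set R) p := by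
  obtain ⟨_, ⟨t, rfl⟩, ht⟩ := set_has_maximal_iff_noetherian.mpr ‹IsNoetherianRing R›
    (Set.range fun t : S ↦ (R ∙ (t • m)).annihilator) (Set.range_nonempty _)
  refine ⟨t, t.2, fun p hp ↦ Set.disjoint_left.mpr fun s hs hsp ↦ ?_⟩
  -- `y` kills `s • t • m` but not `t • m`, contradicting the maximality of `ann (t • m)`.
  obtain ⟨y, hy, hsy⟩ := Ideal.exists_mul_mem_of_mem_minimalPrimes hp hsp
  refine ht _ ⟨⟨s, hs⟩ * t, rfl⟩ (SetLike.lt_iff_le_and_exists.mpr ⟨fun r hr ↦ ?_, y, ?_, hy⟩)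
  · rw [Submodule.mem_annihilator_span_singleton] at hr ⊢
    rw [mul_smul, smul_comm, hr, smul_zero]
  · rw [Submodule.mem_annihilator_span_singleton] at hsy ⊢
    rw [mul_smul, smul_comm]
    rwa [mul_smul] at hsy

theorem exists_smul_mem_supportedSubmodule_iff [IsNoetherianRing R] {Z : Set (PrimeSpectrum R)}
    (hZ : StableUnderSpecialization Z) (S : Submonoid R) {m : M} :
    (∃ t : S, t • m ∈ supportedSubmodule M Z) ↔
      ∀ p ∉ Z, Disjoint (S : Set R) p.asIdeal → ∃ r ∉ p.asIdeal, r • m = 0 := by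
  constructor
  · rintro ⟨t, ht⟩ p hp hSp
    obtain ⟨r, hr, hrt⟩ := mem_supportedSubmodule.mp ht p hp
    exact ⟨r * t, p.isPrime.mul_notMem hr (Set.disjoint_left.mp hSp t.2), by rwa [mul_smul]⟩
  · intro h
    obtain ⟨t, htS, ht⟩ := exists_mem_forall_minimalPrimes_disjoint S m
    refine ⟨⟨t, htS⟩, mem_supportedSubmodule.mpr fun p hp ↦ ?_⟩
    by_contra! hann
    have annihilator_le : (R ∙ (t • m)).annihilator ≤ p.asIdeal := fun r hr ↦ by
      by_contra hrp
      exact hann r hrp ((Submodule.mem_annihilator_span_singleton _ _).mp hr)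
    obtain ⟨q, hq, hqp⟩ := Ideal.exists_minimalPrimes_le annihilator_le
    have hqZ : (⟨q, hq.1.1⟩ : PrimeSpectrum R) ∉ Z := fun hqZ ↦
      hp (hZ ((PrimeSpectrum.le_iff_specializes _ _).mp hqp) hqZ)
    obtain ⟨r, hrq, hrm⟩ := h _ hqZ (ht q hq)
    refine hrq (hq.1.2 ((Submodule.mem_annihilator_span_singleton _ _).mpr ?_))
    rw [smul_comm, hrm, smul_zero]

end SupportedSections

section Localization

variable {R M : Type*} [CommRing R] [AddCommGroup M] [Module R M] (S : Submonoid R)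
  (A : Type*) [CommRing A] [Algebra R A] [IsLocalization S A]
  {M' : Type*} [AddCommGroup M'] [Module R M'] [Module A M'] [IsScalarTower R A M']
  (f : M →ₗ[R] M') [IsLocalizedModule S f]

theorem apply_mem_localized'_iff {N : Submodule R M} {m : M} :
    f m ∈ N.localized' A S f ↔ ∃ t : S, t • m ∈ N := by
  refine ⟨fun ⟨n, hn, s, h⟩ ↦ ?_, fun ⟨t, ht⟩ ↦ ⟨_, ht, t, IsLocalizedModule.mk'_cancel f m t⟩⟩
  rw [IsLocalizedModule.mk'_eq_iff, Submonoid.smul_def, ← map_smul,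
    IsLocalizedModule.eq_iff_exists S f] at h
  obtain ⟨u, hu⟩ := h
  exact ⟨u * s, by rw [mul_smul]; exact hu ▸ N.smul_mem _ hn⟩

theorem localized'_eq_of_forall_apply_mem_iff {N : Submodule R M} {N' : Submodule A M'}
    (h : ∀ m, (∃ t : S, t • m ∈ N) ↔ f m ∈ N') : N.localized' A S f = N' :=
  (Submodule.localized'gi A S f).u_injective <| Submodule.ext fun m ↦
    (apply_mem_localized'_iff S A f).trans (h m)

include S in
theorem exists_notMem_smul_apply_eq_zero_iff (q : Ideal A) {m : M} :
    (∃ x ∉ q, x • f m = 0) ↔ ∃ r ∉ q.under R, r • m = 0 := by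
  refine ⟨fun ⟨x, hxq, hx⟩ ↦ ?_, fun ⟨r, hrq, hr⟩ ↦
    ⟨algebraMap R A r, hrq, by rw [algebraMap_smul, ← map_smul, hr, map_zero]⟩⟩
  obtain ⟨r, s, rfl⟩ := IsLocalization.exists_mk'_eq S x
  have hr : f (r • m) = 0 := by
    rw [map_smul, ← algebraMap_smul A, ← IsLocalization.mk'_spec' A r s, mul_smul, hx, smul_zero]
  obtain ⟨t, ht⟩ := (IsLocalizedModule.eq_zero_iff S f).mp hr
  refine ⟨t * r, ?_, by rwa [mul_smul]⟩
  rw [IsLocalization.mk'_mem_iff] at hxq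
  rw [Ideal.mem_comap, map_mul]
  rwa [Ideal.unit_mul_mem_iff_mem _ (IsLocalization.map_units A t)]

theorem localized'_supportedSubmodule [IsNoetherianRing R] {Z : Set (PrimeSpectrum R)}
    (hZ : StableUnderSpecialization Z) :
    (supportedSubmodule M Z).localized' A S f =
      supportedSubmodule M' (PrimeSpectrum.comap (algebraMap R A) ⁻¹' Z) := by
  refine localized'_eq_of_forall_apply_mem_iff S A f fun m ↦ ?_
  rw [exists_smul_mem_supportedSubmodule_iff hZ, mem_supportedSubmodule]
  have range_comap := PrimeSpectrum.localization_comap_range A S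
  refine ⟨fun h q hq ↦ ?_, fun h p hp hSp ↦ ?_⟩
  · exact (exists_notMem_smul_apply_eq_zero_iff S A f q.asIdeal).mpr
      (h _ hq (range_comap.le ⟨q, rfl⟩))
  · obtain ⟨q, rfl⟩ := range_comap.ge hSp
    exact (exists_notMem_smul_apply_eq_zero_iff S A f q.asIdeal).mp (h q hp)

/-- The subquotient `L ⧸ (N ⊓ L)` of two submodules, which is `L ⧸ N` for the consecutive terms
`N ≤ L` of a filtration. -/
abbrev Subquotient (N L : Submodule R M) : Type _ := L ⧸ N.comap L.subtype

theorem localized'_comap_subtype (N L : Submodule R M) :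
    (N.comap L.subtype).localized' A S (L.toLocalized' A S f) =
      (N.localized' A S f).comap (L.localized' A S f).subtype :=
  localized'_eq_of_forall_apply_mem_iff S A _ fun _ ↦ (apply_mem_localized'_iff S A f).symm

/-- Localization commutes with subquotients, for any localization `g` of the subquotient. -/
noncomputable def localizedSubquotientEquiv (N L : Submodule R M) {T : Type*} [AddCommGroup T]
    [Module R T] [Module A T] [IsScalarTower R A T] (g : Subquotient N L →ₗ[R] T)
    [IsLocalizedModule S g] :
    T ≃ₗ[A] Subquotient (N.localized' A S f) (L.localized' A S f) :=
  ((IsLocalizedModule.linearEquiv S g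
    ((N.comap L.subtype).toLocalizedQuotient' A S (L.toLocalized' A S f))
    ).extendScalarsOfIsLocalization S A).trans
      (Submodule.quotEquivOfEq _ _ (localized'_comap_subtype S A f N L))

end Localization

/-! ### The dimension filtration -/

section ConsecutiveTerms

variable {α : Type*} [PartialOrder α]

theorem forall_covBy_range_iff {ι : Type*} [LinearOrder ι] [WellFoundedLT ι] [PredOrder ι]
    {g : ι → α} (hg : Monotone g) {C : α → α → Prop} (hC : ∀ a, C a a) :
    (∀ x y : Set.range g, x ⋖ y → C x y) ↔ ∀ i j, i ⋖ j → C (g i) (g j) := by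
  refine ⟨fun h i j hij ↦ ?_, ?_⟩
  · rcases (hg hij.le).eq_or_lt with heq | hlt
    · exact heq ▸ hC _
    refine h ⟨_, i, rfl⟩ ⟨_, j, rfl⟩ ⟨hlt, ?_⟩
    rintro ⟨_, m, rfl⟩ him hmj
    exact hij.2 (hg.reflect_lt him) (hg.reflect_lt hmj)
  · rintro h ⟨_, a, rfl⟩ ⟨y, hy⟩ hxy
    obtain ⟨j, hj, hmin⟩ := WellFounded.has_min wellFounded_lt (g ⁻¹' {y}) hy
    obtain rfl : g j = y := hj
    have haj : a < j := hg.reflect_lt hxy.1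
    have hpred : Order.pred j ⋖ j := Order.pred_covBy_of_not_isMin haj.not_isMin
    have pred_lt : g (Order.pred j) < g j :=
      (hg hpred.le).lt_of_ne fun h ↦ hmin _ h hpred.lt
    have le_pred : g a ≤ g (Order.pred j) := hg (Order.le_pred_of_lt haj)
    have eq_pred : g a = g (Order.pred j) := le_pred.eq_of_not_lt fun h ↦
      hxy.2 (c := ⟨_, _, rfl⟩) h pred_lt
    change C (g a) (g j)
    exact eq_pred ▸ h _ _ hpred

theorem forall_castSucc_succ_iff_forall_add_one {G : ℕ → α} (hG : Monotone G) {ℓ : ℕ}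
    {D : Fin (ℓ + 1) → α} (hD : Monotone D) (h : Set.range D = Set.range G)
    {C : α → α → Prop} (hC : ∀ a, C a a) :
    (∀ i : Fin ℓ, C (D i.castSucc) (D i.succ)) ↔ ∀ n, C (G n) (G (n + 1)) := by
  have hfin : (∀ i j, i ⋖ j → C (D i) (D j)) ↔ ∀ i : Fin ℓ, C (D i.castSucc) (D i.succ) := by
    refine ⟨fun H i ↦ H _ _ (by simp), fun H i j hij ↦ ?_⟩
    have hi : i ≠ Fin.last ℓ := Fin.ne_last_of_lt hij.lt
    obtain ⟨i, rfl⟩ := Fin.exists_castSucc_eq.mpr hi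
    obtain rfl : i.succ = j := by ext; simpa using hij
    exact H i
  have hnat : (∀ i j, i ⋖ j → C (G i) (G j)) ↔ ∀ n, C (G n) (G (n + 1)) := by
    simp [Order.covBy_iff_add_one_eq]
  rw [← hfin, ← hnat, ← forall_covBy_range_iff hD hC, ← forall_covBy_range_iff hG hC, h]

theorem exists_strictMono_fin_range_eq {ι : Type*} [LinearOrder ι] [Nonempty ι] {g : ι → α}
    (hg : Monotone g) (hfin : (Set.range g).Finite) :
    ∃ (ℓ : ℕ) (D : Fin (ℓ + 1) → α), StrictMono D ∧ Set.range D = Set.range g := by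
  classical
  let : LinearOrder (Set.range g) := hg.isChain_range.linearOrder
  have := hfin.fintype
  obtain ⟨ℓ, hℓ⟩ := Nat.exists_eq_add_one.mpr (Fintype.card_pos (α := Set.range g))
  let e := Fintype.orderIsoFinOfCardEq (Set.range g) hℓ
  exact ⟨ℓ, Subtype.val ∘ e, Subtype.strictMono_coe _ |>.comp e.strictMono,
    by rw [e.surjective.range_comp, Subtype.range_coe]⟩

end ConsecutiveTerms

section DimFiltration

variable {R M : Type*} [CommRing R] [AddCommGroup M] [Module R M]

theorem stableUnderSpecialization_setOf_ringKrullDim_quotient_lt (d : WithBot ℕ∞) :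
    StableUnderSpecialization {p : PrimeSpectrum R | ringKrullDim (R ⧸ p.asIdeal) < d} := by
  intro p q hpq hp
  have hle : p.asIdeal ≤ q.asIdeal := (PrimeSpectrum.le_iff_specializes _ _).mpr hpq
  exact (ringKrullDim_le_of_surjective (Ideal.Quotient.factor hle)
    (Ideal.Quotient.factor_surjective hle)).trans_lt hp

variable (R M) in
/-- The largest submodule `M_{<n}` of `M` of dimension less than `n`, encoded as the sections
supported at primes `p` with `dim R ⧸ p < n`. -/
noncomputable def dimFiltration (n : ℕ) : Submodule R M :=
  supportedSubmodule M {p | ringKrullDim (R ⧸ p.asIdeal) < n}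

theorem dimFiltration_mono : Monotone (dimFiltration R M) := fun _ _ h ↦
  supportedSubmodule_mono fun p (hp : ringKrullDim (R ⧸ p.asIdeal) < _) ↦
    hp.trans_le (by exact_mod_cast h)

theorem dimFiltration_zero : dimFiltration R M 0 = ⊥ := by
  have support_subset := le_supportedSubmodule_iff.mp (le_refl (dimFiltration R M 0))
  rw [← Submodule.subsingleton_iff_eq_bot, ← Module.support_eq_empty_iff (R := R),
    Set.eq_empty_iff_forall_notMem]
  exact fun p hp ↦ (support_subset hp).not_ge ringKrullDim_nonneg_of_nontrivial

theorem dimFiltration_eq_top {n : ℕ} (hn : ringKrullDim R < n) : dimFiltration R M n = ⊤ :=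
  top_le_iff.mp <| le_supportedSubmodule_iff.mpr fun p _ ↦
    (ringKrullDim_quotient_le p.asIdeal).trans_lt hn

theorem moduleDim_lt_iff_le_dimFiltration {N : Submodule R M} [Module.Finite R N] {n : ℕ} :
    moduleDim R N < n ↔ N ≤ dimFiltration R M n := by
  rw [moduleDim, ← Module.supportDim_eq_ringKrullDim_quotient_annihilator, supportDim_lt_iff,
    dimFiltration, le_supportedSubmodule_iff]
  rfl

theorem isGreatest_moduleDim_le_iff [IsNoetherian R M] (hR : ringKrullDim R < ⊤)
    {N : Submodule R M} :
    IsGreatest {N' : Submodule R M | moduleDim R N' ≤ moduleDim R N} N ↔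
      N ∈ Set.range (dimFiltration R M) := by
  constructor
  · intro h
    obtain ⟨n, hn⟩ := exists_natCast_forall_le_iff_lt
      ((ringKrullDim_quotient_le (Module.annihilator R N)).trans_lt hR)
    have le_iff (N' : Submodule R M) :
        moduleDim R N' ≤ moduleDim R N ↔ N' ≤ dimFiltration R M n :=
      (hn _).trans moduleDim_lt_iff_le_dimFiltration
    exact ⟨n, le_antisymm (h.2 ((le_iff _).mpr le_rfl)) ((le_iff _).mp le_rfl)⟩
  · rintro ⟨n, rfl⟩
    exact ⟨le_refl (moduleDim R _), fun N' hN' ↦ moduleDim_lt_iff_le_dimFiltration.mp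
      (lt_of_le_of_lt hN' (moduleDim_lt_iff_le_dimFiltration.mpr le_rfl))⟩

theorem isDimFiltration_iff [IsNoetherian R M] (hR : ringKrullDim R < ⊤) {ℓ : ℕ}
    {D : Fin (ℓ + 1) → Submodule R M} :
    IsDimFiltration R M ℓ D ↔ StrictMono D ∧ Set.range D = Set.range (dimFiltration R M) := by
  simp only [IsDimFiltration, isGreatest_moduleDim_le_iff hR]
  constructor
  · rintro ⟨zero_eq, -, hD, succ_mem, exists_eq⟩
    refine ⟨hD, subset_antisymm ?_ fun N hN ↦ ?_⟩
    · exact Set.range_subset_iff.mpr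
        (Fin.cases ⟨0, dimFiltration_zero.trans zero_eq.symm⟩ succ_mem)
    · rcases eq_or_ne N ⊥ with rfl | hbot
      · exact ⟨0, zero_eq⟩
      · exact exists_eq N hbot hN
  · rintro ⟨hD, hrange⟩
    obtain ⟨n, hn⟩ := exists_natCast_forall_le_iff_lt hR
    have hbot : ⊥ ∈ Set.range D := hrange ▸ ⟨0, dimFiltration_zero⟩
    have htop : ⊤ ∈ Set.range D := hrange ▸ ⟨n, dimFiltration_eq_top ((hn _).mp le_rfl)⟩
    refine ⟨?_, ?_, hD, fun i ↦ hrange ▸ ⟨_, rfl⟩, fun N _ hN ↦ by rwa [← hrange] at hN⟩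
    · obtain ⟨i, hi⟩ := hbot
      exact eq_bot_iff.mpr (hi ▸ hD.monotone (Fin.zero_le i))
    · obtain ⟨i, hi⟩ := htop
      exact eq_top_iff.mpr (hi ▸ hD.monotone (Fin.le_last i))

theorem finite_range_dimFiltration (hR : ringKrullDim R < ⊤) :
    (Set.range (dimFiltration R M)).Finite := by
  obtain ⟨n, hn⟩ := exists_natCast_forall_le_iff_lt hR
  refine ((Set.finite_Iic n).image (dimFiltration R M)).subset ?_
  rintro _ ⟨m, rfl⟩
  have eq_top := dimFiltration_eq_top (M := M) ((hn _).mp le_rfl)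
  rcases le_total m n with hmn | hnm
  · exact ⟨m, hmn, rfl⟩
  · exact ⟨n, Set.self_mem_Iic, eq_top.trans
      (top_le_iff.mp (eq_top.ge.trans (dimFiltration_mono hnm))).symm⟩

theorem exists_isDimFiltration_and_forall_iff [IsNoetherian R M] (hR : ringKrullDim R < ⊤)
    {C : Submodule R M → Submodule R M → Prop} (hC : ∀ N, C N N) :
    (∃ (ℓ : ℕ) (D : Fin (ℓ + 1) → Submodule R M), IsDimFiltration R M ℓ D ∧
      ∀ i : Fin ℓ, C (D i.castSucc) (D i.succ)) ↔
    ∀ n, C (dimFiltration R M n) (dimFiltration R M (n + 1)) := by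
  simp only [isDimFiltration_iff hR]
  constructor
  · rintro ⟨ℓ, D, ⟨hD, hrange⟩, h⟩
    exact (forall_castSucc_succ_iff_forall_add_one dimFiltration_mono hD.monotone hrange hC).mp h
  · intro h
    obtain ⟨ℓ, D, hD, hrange⟩ :=
      exists_strictMono_fin_range_eq dimFiltration_mono (finite_range_dimFiltration (M := M) hR)
    exact ⟨ℓ, D, ⟨hD, hrange⟩, (forall_castSucc_succ_iff_forall_add_one dimFiltration_mono
      hD.monotone hrange hC).mpr h⟩

theorem isCMModule_of_subsingleton [IsLocalRing R] [Subsingleton M] : IsCMModule R M :=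
  fun h ↦ (not_nontrivial M h).elim

instance subsingleton_subquotient_self (N : Submodule R M) : Subsingleton (Subquotient N N) :=
  Submodule.Quotient.subsingleton_iff.mpr (Submodule.comap_subtype_self N)

theorem isSeqCMGen_iff [IsNoetherian R M] (hR : ringKrullDim R < ⊤) : IsSeqCMGen R M ↔
    ∀ n, IsCMModuleGen R (Subquotient (dimFiltration R M n) (dimFiltration R M (n + 1))) :=
  exists_isDimFiltration_and_forall_iff hR (C := fun N L ↦ IsCMModuleGen R (Subquotient N L))
    fun _ _ _ ↦ isCMModule_of_subsingleton

theorem isSeqCM_iff [IsLocalRing R] [IsNoetherianRing R] [Module.Finite R M] : IsSeqCM R M ↔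
    ∀ n, IsCMModule R (Subquotient (dimFiltration R M n) (dimFiltration R M (n + 1))) :=
  exists_isDimFiltration_and_forall_iff ringKrullDim_lt_top
    (C := fun N L ↦ IsCMModule R (Subquotient N L)) fun _ ↦ isCMModule_of_subsingleton

end DimFiltration

theorem isCMModule_congr {R M N : Type*} [CommRing R] [IsLocalRing R] [AddCommGroup M] [Module R M]
    [AddCommGroup N] [Module R N] (e : M ≃ₗ[R] N) : IsCMModule R M ↔ IsCMModule R N := by
  have hdim : moduleDim R M = moduleDim R N := by rw [moduleDim, moduleDim, e.annihilator_eq]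
  simp only [IsCMModule, moduleDepth, hdim, e.isRegular_congr, e.toEquiv.nontrivial_congr]

/-! ### Localizing the dimension filtration -/

section LocalizedDimFiltration

variable {R M : Type*} [CommRing R] [IsNoetherianRing R] [AddCommGroup M] [Module R M]

theorem HasDimensionFormula.localized'_dimFiltration (hR : HasDimensionFormula R)
    (P : Ideal R) [P.IsPrime] (S : Type*) [CommRing S] [Algebra R S] [IsLocalization.AtPrime S P]
    {M' : Type*} [AddCommGroup M'] [Module R M'] [Module S M'] [IsScalarTower R S M']
    (f : M →ₗ[R] M') [IsLocalizedModule P.primeCompl f] {c : ℕ} (hc : ringKrullDim (R ⧸ P) = c)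
    (n : ℕ) :
    (dimFiltration R M n).localized' S P.primeCompl f = dimFiltration S M' (n - c) := by
  have preimage_eq : PrimeSpectrum.comap (algebraMap R S) ⁻¹'
      {p | ringKrullDim (R ⧸ p.asIdeal) < n} =
        {q | ringKrullDim (S ⧸ q.asIdeal) < (n - c : ℕ)} := by
    ext q
    change ringKrullDim (R ⧸ q.asIdeal.under R) < n ↔ ringKrullDim (S ⧸ q.asIdeal) < (n - c : ℕ)
    rw [hR.ringKrullDim_quotient_under P S q.asIdeal, hc]
    exact add_natCast_lt_natCast_iff Order.bot_lt_krullDim.ne' c n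
  rw [dimFiltration, dimFiltration, localized'_supportedSubmodule P.primeCompl S f
    (stableUnderSpecialization_setOf_ringKrullDim_quotient_lt _), preimage_eq]

theorem HasDimensionFormula.isCMModule_localizedModule_subquotient_iff
    (hR : HasDimensionFormula R) (P : Ideal R) [P.IsPrime] {c : ℕ}
    (hc : ringKrullDim (R ⧸ P) = c) (i j : ℕ) :
    IsCMModule (Localization.AtPrime P) (LocalizedModule P.primeCompl
        (Subquotient (dimFiltration R M i) (dimFiltration R M j))) ↔
      IsCMModule (Localization.AtPrime P) (Subquotient
        (dimFiltration (Localization.AtPrime P) (LocalizedModule P.primeCompl M) (i - c))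
        (dimFiltration (Localization.AtPrime P) (LocalizedModule P.primeCompl M) (j - c))) := by
  rw [isCMModule_congr (localizedSubquotientEquiv P.primeCompl (Localization.AtPrime P)
      (LocalizedModule.mkLinearMap P.primeCompl M) _ _ (LocalizedModule.mkLinearMap _ _)),
    hR.localized'_dimFiltration P _ _ hc, hR.localized'_dimFiltration P _ _ hc]

theorem HasDimensionFormula.isSeqCM_localizedModule_iff [Module.Finite R M]
    (hR : HasDimensionFormula R) (P : Ideal R) [P.IsPrime] :
    IsSeqCM (Localization.AtPrime P) (LocalizedModule P.primeCompl M) ↔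
      ∀ n, IsCMModule (Localization.AtPrime P) (LocalizedModule P.primeCompl
        (Subquotient (dimFiltration R M n) (dimFiltration R M (n + 1)))) := by
  have : IsNoetherianRing (Localization.AtPrime P) :=
    IsLocalization.isNoetherianRing P.primeCompl _ ‹_›
  obtain ⟨c, hc⟩ := hR.exists_ringKrullDim_quotient_eq ‹P.IsPrime›
  simp only [isSeqCM_iff, hR.isCMModule_localizedModule_subquotient_iff P hc]
  constructor
  · intro h n
    rcases lt_or_ge n c with hn | hn
    · rw [Nat.sub_eq_zero_of_le hn, Nat.sub_eq_zero_of_le hn.le]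
      exact isCMModule_of_subsingleton
    · rw [Nat.sub_add_comm hn]
      exact h (n - c)
  · intro h n
    specialize h (n + c)
    rwa [Nat.add_right_comm, Nat.add_sub_cancel, Nat.add_sub_cancel] at h

end LocalizedDimFiltration

theorem stmt13_general {R M : Type*} [CommRing R] [IsNoetherianRing R] (hR : HasDimensionFormula R)
    [AddCommGroup M] [Module R M] [Module.Finite R M] :
    IsSeqCMGen R M ↔
      ∀ (P : Ideal R) (hP : P.IsPrime), ⟨P, hP⟩ ∈ Module.support R M →
        IsSeqCM (Localization.AtPrime P) (LocalizedModule P.primeCompl M) := by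
  rw [isSeqCMGen_iff hR.ringKrullDim_lt_top]
  refine ⟨fun h P _ _ ↦ (hR.isSeqCM_localizedModule_iff P).mpr fun n ↦ h n P,
    fun h n P hP hnt ↦ ?_⟩
  have hPM : ⟨P, hP⟩ ∈ Module.support R M :=
    Module.support_subset_of_injective _ (Submodule.subtype_injective _)
      (Module.support_subset_of_surjective _ (Submodule.mkQ_surjective _)
        (Module.mem_support_iff.mpr hnt))
  exact (hR.isSeqCM_localizedModule_iff P).mp (h P hP hPM) n hnt

/-- Over a finitely generated algebra over a field, `M` is sequentially
Cohen-Macaulay iff `M_P` is so over `R_P` for every `P ∈ Supp_R M`. -/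
theorem stmt13 (k : Type*) [Field k] (R : Type*) [CommRing R] [Algebra k R]
    [Algebra.FiniteType k R]
    (M : Type*) [AddCommGroup M] [Module R M] [Module.Finite R M] [Nontrivial M] :
    IsSeqCMGen R M ↔
      ∀ (P : Ideal R) (hP : P.IsPrime), ⟨P, hP⟩ ∈ Module.support R M →
        IsSeqCM (Localization.AtPrime P) (LocalizedModule P.primeCompl M) := by
  have := Algebra.FiniteType.isNoetherianRing k R
  exact stmt13_general (hasDimensionFormula_of_finiteType k R)
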